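/- Let f_ε(q) = (1/2)·log(‖q‖² + ε) on ℝ⁴ⁿ ≅ ℂ²ⁿ, ε > 0. Then the coefficient density of (∂∂_J f_ε)ⁿ relative to Ω_n equals n!·(‖q‖² + 2ε) / (2·(‖q‖² + ε)^{n+1}). In particular, as ε → 0 this density converges pointwise (for q ≠ 0) and in L¹_loc to n!/(2‖q‖^{2n}). -/

import Mathlib

open Filter MeasureTheory

noncomputable section

/-- `ℝ^{4n} ≅ ℂ^{2n}` via `z_m = x_{2m} + (−1)^m x_{2m+1} i`. -/
abbrev En (n : ℕ) := EuclideanSpace ℝ (Fin (4 * n))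

/-- Partial derivative in the `m`-th coordinate direction (junk value `0` out of range). -/
def pD {n : ℕ} (m : ℕ) (f : En n → ℂ) (x : En n) : ℂ :=
  if h : m < 4 * n then fderiv ℝ f x (EuclideanSpace.single ⟨m, h⟩ 1) else 0

/-- Wirtinger derivative `∂_{z_m} = (∂_{x_{2m}} − (−1)^m i ∂_{x_{2m+1}})/2`. -/
def Wz {n : ℕ} (m : ℕ) (f : En n → ℂ) (x : En n) : ℂ :=
  (pD (2 * m) f x - (-1 : ℂ) ^ m * Complex.I * pD (2 * m + 1) f x) / 2

/-- Conjugate Wirtinger derivative `∂_{z̄_m} = (∂_{x_{2m}} + (−1)^m i ∂_{x_{2m+1}})/2`. -/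
def Wzb {n : ℕ} (m : ℕ) (f : En n → ℂ) (x : En n) : ℂ :=
  (pD (2 * m) f x + (-1 : ℂ) ^ m * Complex.I * pD (2 * m + 1) f x) / 2

/-- The index pairing `i ↦ i + (−1)^i`, i.e. `2j ↔ 2j+1`. -/
def pairIdx (i : ℕ) : ℕ := if Even i then i + 1 else i - 1

/-- The coefficient `c_{ij} = (−1)^{j+1} ∂_{z_i}∂_{z̄_{j+(−1)^j}} u` of `dz_i ∧ dz_j`
in `∂∂_J u = Σ_{i,j} c_{ij} dz_i ∧ dz_j`. -/
def cCoef {n : ℕ} (i j : ℕ) (u : En n → ℝ) (x : En n) : ℂ :=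
  (-1 : ℂ) ^ (j + 1) *
    Wz i (fun y => Wzb (pairIdx j) (fun w => (u w : ℂ)) y) x

/-- The density of `(∂∂_J u)ⁿ` relative to `Ω_n = dz_0 ∧ ... ∧ dz_{2n−1}`:
if `∂∂_J u = Σ_{i,j} c_{ij} dz_i∧dz_j`, then
`(∂∂_J u)ⁿ = (Σ_{σ ∈ S_{2n}} sgn σ ∏_{l<n} c_{σ(2l)σ(2l+1)}) · Ω_n`. -/
def density (n : ℕ) (u : En n → ℝ) (x : En n) : ℂ :=
  ∑ σ : Equiv.Perm (Fin (2 * n)),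
    ((Equiv.Perm.sign σ : ℤ) : ℂ) *
      ∏ l : Fin n,
        cCoef ((σ ⟨2 * l.val, by omega⟩).val) ((σ ⟨2 * l.val + 1, by omega⟩).val) u x

/-- The regularized fundamental solution `f_ε(q) = (1/2)·log(‖q‖² + ε)`. -/
def freg (n : ℕ) (ε : ℝ) (q : En n) : ℝ := (1 / 2) * Real.log (‖q‖ ^ 2 + ε)

/-!
For a radial function `u = φ(‖q‖²)` the two-form `∂∂_J u` is represented by the bilinear form
`φ' ω + φ'' α ⊗ ω(z, ·)`, where `ω` is the standard symplectic form, `z` is the vector of complex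
coordinates of `q`, and `α = Σ z̄_i e_i`. Antisymmetrised, it becomes `2φ' (ω + c α ∧ ω(z, ·))`
with `c = φ''/(2φ')`, which is `2φ'` times the pullback of `ω` under the transvection
`v ↦ v + c α(v) z`. The density of the top power is therefore `n! (2φ')ⁿ` times the determinant
`1 + c α(z) = 1 + c ‖q‖²` of this transvection. The `L¹_loc` convergence is by domination: the
distance to the limit density is at most the limit density itself, which is integrable near `0`
as `2n < 4n`.
-/

section WedgePower

theorem exists_eq_prodCongrLeft {κ : Type*} [Finite κ] {σ : Equiv.Perm (κ × Fin 2)}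
    (h : ∀ l, (σ (l, 0)).2 = 0 ∧ σ (l, 1) = ((σ (l, 0)).1, 1)) :
    ∃ π : Equiv.Perm κ, σ = Equiv.prodCongrLeft fun _ => π := by
  have hinj : Function.Injective fun l => (σ (l, 0)).1 := fun l m hlm => by
    simpa using σ.injective (Prod.ext hlm ((h l).1.trans (h m).1.symm))
  refine ⟨Equiv.ofBijective _ (Finite.injective_iff_bijective.mp hinj), ?_⟩
  ext1 ⟨l, b⟩
  fin_cases b
  · exact Prod.ext rfl (h l).1
  · exact (h l).2

variable {R M κ : Type*} [CommRing R] [AddCommGroup M] [Module R M] [Fintype κ]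

/-- The tensor power `B^{⊗κ}` of a bilinear form, as a multilinear map whose argument `(l, b)` is
the `b`-th argument of the `l`-th factor. -/
def tensorPower (κ : Type*) [Fintype κ] (B : LinearMap.BilinForm R M) :
    MultilinearMap R (fun _ : κ × Fin 2 => M) R :=
  ((MultilinearMap.mkPiAlgebra R κ R).compMultilinearMap (N := fun _ (_ : Fin 2) => M) fun _ =>
    (MultilinearMap.ofSubsingletonₗ R R M R (0 : Fin 1) ∘ₗ B).uncurryLeft).domDomCongr
      (Equiv.sigmaEquivProd κ (Fin 2))

theorem tensorPower_apply (B : LinearMap.BilinForm R M) (v : κ × Fin 2 → M) :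
    tensorPower κ B v = ∏ l, B (v (l, 0)) (v (l, 1)) := rfl

/-- The bilinear form `Σ_k e_{k0} ⊗ e_{k1}`. -/
def pairForm (κ R : Type*) [Fintype κ] [CommRing R] : LinearMap.BilinForm R (κ × Fin 2 → R) :=
  ∑ k, LinearMap.BilinForm.linMulLin (LinearMap.proj (k, 0)) (LinearMap.proj (k, 1))

theorem pairForm_apply (u v : κ × Fin 2 → R) :
    pairForm κ R u v = ∑ k, u (k, 0) * v (k, 1) := by
  simp [pairForm]

/-- The standard symplectic form `Σ_k e_{k0} ∧ e_{k1}`. -/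
def symplecticForm (κ R : Type*) [Fintype κ] [CommRing R] :
    LinearMap.BilinForm R (κ × Fin 2 → R) :=
  pairForm κ R - (pairForm κ R).flip

theorem symplecticForm_isAlt : (symplecticForm κ R).IsAlt := fun u => by
  simp [symplecticForm]

variable [DecidableEq κ]

/-- The `κ`-fold wedge power of the two-form `B`, as an alternating map; a bilinear form
`Σ B i j e_i ⊗ e_j` stands for the two-form `Σ B i j e_i ∧ e_j`, so `B` need not be alternating. -/
def wedgePower (κ : Type*) [Fintype κ] [DecidableEq κ] (B : LinearMap.BilinForm R M) :
    M [⋀^κ × Fin 2]→ₗ[R] R :=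
  MultilinearMap.alternatization (tensorPower κ B)

theorem wedgePower_apply (B : LinearMap.BilinForm R M) (v : κ × Fin 2 → M) :
    wedgePower κ B v = ∑ σ : Equiv.Perm (κ × Fin 2),
      Equiv.Perm.sign σ • ∏ l, B (v (σ (l, 0))) (v (σ (l, 1))) := by
  simp only [wedgePower, MultilinearMap.alternatization_apply, MultilinearMap.domDomCongr_apply,
    tensorPower_apply]

theorem wedgePower_smul (a : R) (B : LinearMap.BilinForm R M) :
    wedgePower κ (a • B) = a ^ Fintype.card κ • wedgePower κ B := by
  ext v
  simp only [wedgePower_apply, AlternatingMap.smul_apply, LinearMap.smul_apply, smul_eq_mul,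
    Finset.prod_mul_distrib, Finset.prod_const, Finset.card_univ, Finset.mul_sum, mul_smul_comm]

theorem alternatization_domDomCongr {ι N : Type*} [Fintype ι] [DecidableEq ι] [AddCommGroup N]
    [Module R N] (m : MultilinearMap R (fun _ : ι => M) N) (τ : Equiv.Perm ι) :
    MultilinearMap.alternatization (m.domDomCongr τ) =
      Equiv.Perm.sign τ • MultilinearMap.alternatization m := by
  ext v
  rw [AlternatingMap.smul_apply, MultilinearMap.alternatization_apply,
    MultilinearMap.alternatization_apply, Finset.smul_sum,
    ← Equiv.sum_comp (Equiv.mulRight τ⁻¹)]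
  refine Finset.sum_congr rfl fun σ _ => ?_
  simp [smul_smul, mul_comm, MultilinearMap.domDomCongr_apply]

theorem tensorPower_sub_flip (B : LinearMap.BilinForm R M) :
    tensorPower κ (B - B.flip) = ∑ τ : κ → Equiv.Perm (Fin 2),
      Equiv.Perm.sign (Equiv.prodCongrRight τ) •
        (tensorPower κ B).domDomCongr (Equiv.prodCongrRight τ) := by
  ext v
  have hfactor (l : κ) : (B - B.flip) (v (l, 0)) (v (l, 1)) = ∑ τ : Equiv.Perm (Fin 2),
      Equiv.Perm.sign τ • B (v (l, τ 0)) (v (l, τ 1)) := by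
    have huniv : (Finset.univ : Finset (Equiv.Perm (Fin 2))) = {1, Equiv.swap 0 1} := by decide
    rw [huniv, Finset.sum_pair (by decide), Equiv.Perm.sign_one, one_smul,
      Equiv.Perm.sign_swap (by decide), Units.neg_smul, one_smul, Equiv.swap_apply_left,
      Equiv.swap_apply_right, ← sub_eq_add_neg]
    rfl
  simp only [tensorPower_apply, hfactor, Finset.prod_univ_sum, Fintype.piFinset_univ,
    sum_apply, smul_apply, MultilinearMap.domDomCongr_apply,
    Equiv.prodCongrRight_apply, Equiv.Perm.sign_prodCongrRight, Finset.prod_smul]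

theorem wedgePower_sub_flip (B : LinearMap.BilinForm R M) :
    wedgePower κ (B - B.flip) = 2 ^ Fintype.card κ • wedgePower κ B := by
  simp only [wedgePower, tensorPower_sub_flip, map_sum]
  simp [alternatization_domDomCongr, smul_smul, Fintype.card_perm]

theorem compLinearMap_eq_det_smul {ι : Type*} [Finite ι] (e : Module.Basis ι R M)
    (f : M [⋀^ι]→ₗ[R] R) (P : M →ₗ[R] M) : f.compLinearMap P = LinearMap.det P • f := by
  classical
  have := Fintype.ofFinite ι
  ext v
  rw [f.eq_smul_basis_det e]
  have hdet : e.det (fun i => P (v i)) = LinearMap.det P * e.det v := e.det_comp P v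
  simp [hdet, mul_left_comm]

/-- As `B` is alternating, `B + f ∧ B x` is the pullback of `B` under `u ↦ u + f u • x`. -/
theorem wedgePower_add_wedge (e : Module.Basis (κ × Fin 2) R M) {B : LinearMap.BilinForm R M}
    (hB : B.IsAlt) (f : Module.Dual R M) (x : M) :
    wedgePower κ (B + f.smulRight (B x) - (B x).smulRight f) = (1 + f x) • wedgePower κ B := by
  have := Module.Free.of_basis e
  have := Module.Finite.of_basis e
  rw [← LinearMap.transvection.det, ← compLinearMap_eq_det_smul e]
  ext v
  have hpull (u w : M) : (B + f.smulRight (B x) - (B x).smulRight f) u w =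
      B (LinearMap.transvection f x u) (LinearMap.transvection f x w) := by
    simp [LinearMap.transvection.apply, hB x, ← hB.neg_eq x u]
    ring
  simp only [wedgePower_apply, hpull, AlternatingMap.compLinearMap_apply]

theorem pairForm_single (i j : κ × Fin 2) :
    pairForm κ R (Pi.single i 1) (Pi.single j 1) = if i.2 = 0 ∧ j = (i.1, 1) then 1 else 0 := by
  obtain ⟨i, a⟩ := i
  obtain ⟨j, b⟩ := j
  fin_cases a <;> fin_cases b <;> simp [pairForm_apply, Pi.single_apply]

theorem wedgePower_pairForm :
    wedgePower κ (pairForm κ R) (fun i => Pi.single i 1) = (Fintype.card κ).factorial := by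
  simp only [wedgePower_apply, pairForm_single, Finset.prod_boole, Finset.mem_univ, true_implies]
  calc _ = ∑ _π : Equiv.Perm κ, (1 : R) := by
        refine (Finset.sum_of_injOn (fun π => Equiv.prodCongrLeft fun _ : Fin 2 => π) ?_ (by simp)
          (fun σ _ hσ => ?_) fun π _ => ?_).symm
        · exact fun π _ ρ _ h => Equiv.ext fun l => congrArg Prod.fst (Equiv.congr_fun h (l, 0))
        · rw [if_neg fun h => hσ ?_, smul_zero]
          obtain ⟨π, rfl⟩ := exists_eq_prodCongrLeft h
          simp
        · simp [Equiv.Perm.sign_prodCongrLeft]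
    _ = (Fintype.card κ).factorial := by simp [Fintype.card_perm]

theorem wedgePower_symplecticForm :
    wedgePower κ (symplecticForm κ R) (fun i => Pi.single i 1) =
      2 ^ Fintype.card κ * (Fintype.card κ).factorial := by
  rw [symplecticForm, wedgePower_sub_flip, AlternatingMap.smul_apply, wedgePower_pairForm]
  simp

theorem wedgePower_symplecticForm_add_rankOne {K : Type*} [Field K] [NeZero (2 : K)] {a : K}
    (ha : a ≠ 0) (c : K) (f : Module.Dual K (κ × Fin 2 → K)) (x : κ × Fin 2 → K) :
    wedgePower κ (a • symplecticForm κ K + c • f.smulRight (symplecticForm κ K x))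
        (fun i => Pi.single i 1) =
      (Fintype.card κ).factorial * (2 * a) ^ Fintype.card κ * (1 + c / (2 * a) * f x) := by
  set ω := symplecticForm κ K
  set B := a • ω + c • f.smulRight (ω x) with hB
  have halt : ((2 * a) • ω).IsAlt := symplecticForm_isAlt.smul _
  have hsub : B - B.flip = (2 * a) • ω + ((c / (2 * a)) • f).smulRight (((2 * a) • ω) x) -
      (((2 * a) • ω) x).smulRight ((c / (2 * a)) • f) := by
    refine LinearMap.ext₂ fun u v => ?_
    have hanti : ω v u = -ω u v := (symplecticForm_isAlt.neg_eq u v).symm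
    simp only [hB, LinearMap.sub_apply, LinearMap.add_apply, LinearMap.smul_apply,
      LinearMap.smulRight_apply, LinearMap.BilinForm.flip_apply, smul_eq_mul, hanti]
    field_simp
    ring
  have hwedge := DFunLike.congr_fun (wedgePower_sub_flip (κ := κ) B) fun i => Pi.single i 1
  rw [hsub, wedgePower_add_wedge (Pi.basisFun K _) halt, wedgePower_smul, AlternatingMap.smul_apply,
    AlternatingMap.smul_apply, AlternatingMap.smul_apply, wedgePower_symplecticForm] at hwedge
  simp only [LinearMap.smul_apply, smul_eq_mul, nsmul_eq_mul, Nat.cast_pow, Nat.cast_ofNat]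
    at hwedge
  refine mul_left_cancel₀ (pow_ne_zero (Fintype.card κ) (two_ne_zero (α := K))) ?_
  rw [← hwedge]
  ring

end WedgePower

section PartialDerivative

variable {n : ℕ}

theorem pD_mul {f g : En n → ℂ} {x : En n} (hf : DifferentiableAt ℝ f x)
    (hg : DifferentiableAt ℝ g x) (m : ℕ) :
    pD m (fun y => f y * g y) x = f x * pD m g x + pD m f x * g x := by
  unfold pD
  split_ifs
  · simp [fderiv_fun_mul hf hg, mul_comm (g x)]
  · simp

theorem Wz_mul {f g : En n → ℂ} {x : En n} (hf : DifferentiableAt ℝ f x)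
    (hg : DifferentiableAt ℝ g x) (m : ℕ) :
    Wz m (fun y => f y * g y) x = f x * Wz m g x + Wz m f x * g x := by
  simp only [Wz, pD_mul hf hg]
  ring

theorem pD_comp_real {φ : ℝ → ℝ} {φ' : ℝ} {u : En n → ℝ} {x : En n}
    (hφ : HasDerivAt φ φ' (u x)) (hu : DifferentiableAt ℝ u x) (m : ℕ) :
    pD m (fun y => (φ (u y) : ℂ)) x = φ' * pD m (fun y => (u y : ℂ)) x := by
  have hu' := Complex.ofRealCLM.hasFDerivAt.comp x hu.hasFDerivAt
  have hcomp := Complex.ofRealCLM.hasFDerivAt.comp x (hφ.comp_hasFDerivAt x hu.hasFDerivAt)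
  simp only [Function.comp_def, Complex.ofRealCLM_apply] at hu' hcomp
  simp [pD, hu'.fderiv, hcomp.fderiv]

theorem pD_continuousLinearMap (L : En n →L[ℝ] ℂ) {m : ℕ} (hm : m < 4 * n) (x : En n) :
    pD m L x = L (EuclideanSpace.single ⟨m, hm⟩ 1) := by
  simp [pD, hm]

/-- The `m`-th real coordinate, extended by zero out of range. -/
def xCoord (m : ℕ) : En n →L[ℝ] ℝ :=
  if h : m < 4 * n then EuclideanSpace.proj ⟨m, h⟩ else 0

/-- The complex coordinate `z_m = x_{2m} + (−1)^m x_{2m+1} i`, extended by zero out of range. -/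
def zCoord (m : ℕ) : En n →L[ℝ] ℂ :=
  Complex.ofRealCLM ∘L xCoord (2 * m) +
    ((-1 : ℂ) ^ m * Complex.I) • Complex.ofRealCLM ∘L xCoord (2 * m + 1)

theorem zCoord_apply (m : ℕ) (x : En n) :
    zCoord m x = xCoord (2 * m) x + (-1 : ℂ) ^ m * Complex.I * xCoord (2 * m + 1) x := rfl

theorem conj_zCoord (m : ℕ) (x : En n) : starRingEnd ℂ (zCoord m x) =
    xCoord (2 * m) x - (-1 : ℂ) ^ m * Complex.I * xCoord (2 * m + 1) x := by
  simp [zCoord_apply, sub_eq_add_neg]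

theorem xCoord_single {k m : ℕ} (hk : k < 4 * n) :
    xCoord m (EuclideanSpace.single (⟨k, hk⟩ : Fin (4 * n)) (1 : ℝ)) = if m = k then 1 else 0 := by
  unfold xCoord
  split_ifs <;> simp_all

theorem pD_normSq (m : ℕ) (x : En n) :
    pD m (fun y => ((‖y‖ ^ 2 : ℝ) : ℂ)) x = 2 * xCoord m x := by
  have h := Complex.ofRealCLM.hasFDerivAt.comp x (hasStrictFDerivAt_norm_sq x).hasFDerivAt
  simp only [Function.comp_def, Complex.ofRealCLM_apply] at h
  rw [pD, h.fderiv, xCoord]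
  split_ifs <;> simp [EuclideanSpace.inner_single_right]

theorem Wz_zCoord {i : ℕ} (hi : i < 2 * n) (m : ℕ) (x : En n) :
    Wz i (zCoord m) x = if m = i then 1 else 0 := by
  have heven : 2 * m + 1 ≠ 2 * i := by omega
  have hodd : 2 * m ≠ 2 * i + 1 := by omega
  rw [Wz, pD_continuousLinearMap _ (by omega), pD_continuousLinearMap _ (by omega)]
  simp only [zCoord_apply, xCoord_single, heven, hodd, if_false, add_left_inj,
    mul_right_inj' two_ne_zero]
  split_ifs with h
  · have hsq : ((-1 : ℂ) ^ m) ^ 2 = 1 := by rw [pow_right_comm, neg_one_sq, one_pow]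
    subst h
    push_cast
    linear_combination (1 / 2) * hsq - ((-1 : ℂ) ^ m) ^ 2 / 2 * Complex.I_sq
  · simp

end PartialDerivative

section Radial

variable {n : ℕ} {φ : ℝ → ℝ}

theorem differentiableAt_normSq (x : En n) : DifferentiableAt ℝ (fun y => ‖y‖ ^ 2) x :=
  differentiableAt_id.norm_sq ℝ

theorem Wz_radial {x : En n} {c : ℝ} (hφ : HasDerivAt φ c (‖x‖ ^ 2)) (m : ℕ) :
    Wz m (fun y => (φ (‖y‖ ^ 2) : ℂ)) x = c * starRingEnd ℂ (zCoord m x) := by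
  simp only [Wz, pD_comp_real hφ (differentiableAt_normSq x), pD_normSq, conj_zCoord]
  ring

theorem Wzb_radial {x : En n} {c : ℝ} (hφ : HasDerivAt φ c (‖x‖ ^ 2)) (m : ℕ) :
    Wzb m (fun y => (φ (‖y‖ ^ 2) : ℂ)) x = c * zCoord m x := by
  simp only [Wzb, pD_comp_real hφ (differentiableAt_normSq x), pD_normSq, zCoord_apply]
  ring

variable {φ' : ℝ → ℝ} {φ'' : ℝ} {x : En n}

theorem cCoef_radial (hφ : ∀ y : En n, HasDerivAt φ (φ' (‖y‖ ^ 2)) (‖y‖ ^ 2))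
    (hφ' : HasDerivAt φ' φ'' (‖x‖ ^ 2)) {i : ℕ} (hi : i < 2 * n) (j : ℕ) :
    cCoef i j (fun y => φ (‖y‖ ^ 2)) x = (-1) ^ (j + 1) *
      (φ' (‖x‖ ^ 2) * (if pairIdx j = i then 1 else 0) +
        φ'' * starRingEnd ℂ (zCoord i x) * zCoord (pairIdx j) x) := by
  have hdiff : DifferentiableAt ℝ (fun y : En n => (φ' (‖y‖ ^ 2) : ℂ)) x :=
    (Complex.ofRealCLM.hasFDerivAt.comp x
      (hφ'.comp_hasFDerivAt x (differentiableAt_normSq x).hasFDerivAt)).differentiableAt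
  simp only [cCoef, Wzb_radial (hφ _)]
  rw [Wz_mul hdiff (zCoord _).differentiableAt, Wz_zCoord hi, Wz_radial hφ']

end Radial

section Density

variable {n : ℕ}

/-- The splitting of `Fin (2n)` into the pairs `{2l, 2l+1}`. -/
def pairEquiv (n : ℕ) : Fin n × Fin 2 ≃ Fin (2 * n) :=
  finProdFinEquiv.trans (finCongr (mul_comm n 2))

theorem pairEquiv_val (i : Fin n × Fin 2) : (pairEquiv n i : ℕ) = 2 * i.1 + i.2 := by
  simp [pairEquiv, add_comm]

theorem density_eq_wedgePower {u : En n → ℝ} {x : En n}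
    {B : LinearMap.BilinForm ℂ (Fin n × Fin 2 → ℂ)}
    (hB : ∀ i j, B (Pi.single i 1) (Pi.single j 1) = cCoef (pairEquiv n i) (pairEquiv n j) u x) :
    density n u x = wedgePower (Fin n) B fun i => Pi.single i 1 := by
  have heven (l : Fin n) : (⟨2 * l, by omega⟩ : Fin (2 * n)) = pairEquiv n (l, 0) :=
    Fin.ext (by simp [pairEquiv_val])
  have hodd (l : Fin n) : (⟨2 * l + 1, by omega⟩ : Fin (2 * n)) = pairEquiv n (l, 1) :=
    Fin.ext (by simp [pairEquiv_val])
  rw [density, wedgePower_apply, ← Equiv.sum_comp (pairEquiv n).permCongr]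
  simp only [heven, hodd, Equiv.permCongr_apply, Equiv.symm_apply_apply, hB,
    Equiv.Perm.sign_permCongr, Units.smul_def, zsmul_eq_mul]

/-- The vector of the complex coordinates `z_{2l+b}` of a point, indexed by the pairs `(l, b)`. -/
def zVec (x : En n) : Fin n × Fin 2 → ℂ := fun i => zCoord (pairEquiv n i) x

theorem conj_zCoord_mul_self (m : ℕ) (x : En n) :
    starRingEnd ℂ (zCoord m x) * zCoord m x =
      xCoord (2 * m) x ^ 2 + xCoord (2 * m + 1) x ^ 2 := by
  have hsq : ((-1 : ℂ) ^ m) ^ 2 = 1 := by rw [pow_right_comm, neg_one_sq, one_pow]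
  rw [conj_zCoord, zCoord_apply]
  linear_combination (xCoord (2 * m + 1) x : ℂ) ^ 2 * (hsq - ((-1 : ℂ) ^ m) ^ 2 * Complex.I_sq)

theorem normSq_eq_sum_xCoord (x : En n) :
    ‖x‖ ^ 2 = ∑ i : Fin (2 * n), (xCoord (2 * i) x ^ 2 + xCoord (2 * i + 1) x ^ 2) := by
  have hcoord (i : Fin (4 * n)) : x i = xCoord i x := by simp [xCoord]
  rw [EuclideanSpace.real_norm_sq_eq,
    ← ((pairEquiv (2 * n)).trans (finCongr (by ring))).sum_comp, Fintype.sum_prod_type]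
  simp [hcoord, pairEquiv_val]

theorem star_zVec_dotProduct_zVec (x : En n) : star (zVec x) ⬝ᵥ zVec x = (‖x‖ : ℂ) ^ 2 := by
  calc star (zVec x) ⬝ᵥ zVec x
      = ∑ i, starRingEnd ℂ (zCoord (pairEquiv n i) x) * zCoord (pairEquiv n i) x := by
        simp [dotProduct, zVec]
    _ = ∑ i : Fin (2 * n), starRingEnd ℂ (zCoord i x) * zCoord i x :=
        (pairEquiv n).sum_comp fun i : Fin (2 * n) => starRingEnd ℂ (zCoord i x) * zCoord i x
    _ = (‖x‖ : ℂ) ^ 2 := by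
        simp only [conj_zCoord_mul_self]
        exact_mod_cast (normSq_eq_sum_xCoord x).symm

theorem symplecticForm_single_right {R : Type*} [CommRing R] (w : ℕ → R) (j : Fin n × Fin 2) :
    symplecticForm (Fin n) R (fun i => w (pairEquiv n i)) (Pi.single j 1) =
      (-1) ^ (pairEquiv n j + 1 : ℕ) * w (pairIdx (pairEquiv n j)) := by
  obtain ⟨l, b⟩ := j
  fin_cases b <;>
    simp [symplecticForm, pairForm_apply, Pi.single_apply, pairEquiv_val, pairIdx, pow_succ]

theorem symplecticForm_single_single {R : Type*} [CommRing R] (i j : Fin n × Fin 2) :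
    symplecticForm (Fin n) R (Pi.single i 1) (Pi.single j 1) =
      (-1) ^ (pairEquiv n j + 1 : ℕ) *
        if pairIdx (pairEquiv n j) = pairEquiv n i then 1 else 0 := by
  have hsingle : (Pi.single i 1 : Fin n × Fin 2 → R) = fun k =>
      if (pairEquiv n k : ℕ) = pairEquiv n i then 1 else 0 := by
    ext k
    simp [Pi.single_apply, Fin.val_inj]
  rw [hsingle]
  exact symplecticForm_single_right (fun m => if m = pairEquiv n i then 1 else 0) j

theorem symplecticForm_zVec_single (x : En n) (j : Fin n × Fin 2) :
    symplecticForm (Fin n) ℂ (zVec x) (Pi.single j 1) =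
      (-1) ^ (pairEquiv n j + 1 : ℕ) * zCoord (pairIdx (pairEquiv n j)) x :=
  symplecticForm_single_right (fun m => zCoord m x) j

theorem density_radial {φ φ' : ℝ → ℝ} {φ'' : ℝ} {x : En n}
    (hφ : ∀ y : En n, HasDerivAt φ (φ' (‖y‖ ^ 2)) (‖y‖ ^ 2))
    (hφ' : HasDerivAt φ' φ'' (‖x‖ ^ 2)) (hx : φ' (‖x‖ ^ 2) ≠ 0) :
    density n (fun y => φ (‖y‖ ^ 2)) x =
      n.factorial * (2 * φ' (‖x‖ ^ 2)) ^ n * (1 + φ'' / (2 * φ' (‖x‖ ^ 2)) * ‖x‖ ^ 2) := by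
  set ω := symplecticForm (Fin n) ℂ with hω
  have hcoef (i j : Fin n × Fin 2) :
      ((φ' (‖x‖ ^ 2) : ℂ) • ω + (φ'' : ℂ) • (dotProductBilin ℂ ℂ (star (zVec x))).smulRight
        (ω (zVec x))) (Pi.single i 1) (Pi.single j 1) =
      cCoef (pairEquiv n i) (pairEquiv n j) (fun y => φ (‖y‖ ^ 2)) x := by
    rw [cCoef_radial hφ hφ' (Fin.is_lt _)]
    simp only [LinearMap.add_apply, LinearMap.smul_apply, LinearMap.smulRight_apply, smul_eq_mul,
      dotProductBilin_apply_apply, dotProduct_single_one, hω, symplecticForm_single_single,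
      symplecticForm_zVec_single, Pi.star_apply, zVec, starRingEnd_apply]
    ring
  rw [density_eq_wedgePower hcoef,
    wedgePower_symplecticForm_add_rankOne (Complex.ofReal_ne_zero.mpr hx), Fintype.card_fin,
    dotProductBilin_apply_apply, star_zVec_dotProduct_zVec]

end Density

section Regularization

variable {n : ℕ}

theorem density_freg {ε : ℝ} (hε : 0 < ε) (q : En n) :
    density n (freg n ε) q =
      (((n.factorial : ℝ) * (‖q‖ ^ 2 + 2 * ε) / (2 * (‖q‖ ^ 2 + ε) ^ (n + 1)) : ℝ) : ℂ) := by
  have hpos (y : En n) : ‖y‖ ^ 2 + ε ≠ 0 := by positivity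
  have hφ (y : En n) : HasDerivAt (fun s => (1 / 2) * Real.log (s + ε))
      ((1 / 2) * (‖y‖ ^ 2 + ε)⁻¹) (‖y‖ ^ 2) :=
    ((((hasDerivAt_id _).add_const ε).log (hpos y)).const_mul (1 / 2)).congr_deriv (by simp)
  have hφ' : HasDerivAt (fun s => (1 / 2) * (s + ε)⁻¹)
      ((1 / 2) * (-1 / (‖q‖ ^ 2 + ε) ^ 2)) (‖q‖ ^ 2) :=
    (((hasDerivAt_id _).add_const ε).fun_inv (hpos q)).const_mul (1 / 2)
  have hne : (1 / 2) * (‖q‖ ^ 2 + ε)⁻¹ ≠ 0 := mul_ne_zero (by norm_num) (inv_ne_zero (hpos q))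
  have hbase : 2 * ((1 / 2 * (‖q‖ ^ 2 + ε)⁻¹ : ℝ) : ℂ) = ((‖q‖ ^ 2 + ε : ℝ) : ℂ)⁻¹ := by
    push_cast
    ring
  have hfreg : freg n ε = fun q => (1 / 2) * Real.log (‖q‖ ^ 2 + ε) := rfl
  rw [hfreg, density_radial hφ hφ' hne, hbase, inv_pow]
  have hposC : (‖q‖ ^ 2 + ε : ℂ) ≠ 0 := mod_cast hpos q
  push_cast
  field_simp
  ring

theorem tendsto_density_freg {q : En n} (hq : q ≠ 0) :
    Tendsto (fun ε : ℝ => density n (freg n ε) q) (nhdsWithin 0 (Set.Ioi 0))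
      (nhds (((n.factorial : ℝ) / (2 * ‖q‖ ^ (2 * n)) : ℝ) : ℂ)) := by
  have hq' : ‖q‖ ≠ 0 := norm_ne_zero_iff.mpr hq
  have hcont : ContinuousAt (fun ε : ℝ =>
      (((n.factorial : ℝ) * (‖q‖ ^ 2 + 2 * ε) / (2 * (‖q‖ ^ 2 + ε) ^ (n + 1)) : ℝ) : ℂ)) 0 :=
    Complex.continuous_ofReal.continuousAt.comp
      (ContinuousAt.div (by fun_prop) (by fun_prop) (by simp [hq']))
  have hvalue : (n.factorial : ℝ) / (2 * ‖q‖ ^ (2 * n)) =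
      n.factorial * (‖q‖ ^ 2 + 2 * 0) / (2 * (‖q‖ ^ 2 + 0) ^ (n + 1)) := by
    field_simp
    ring
  rw [hvalue]
  refine (hcont.tendsto.mono_left nhdsWithin_le_nhds).congr' ?_
  filter_upwards [self_mem_nhdsWithin] with ε hε
  exact (density_freg hε q).symm

theorem norm_density_freg_sub_le {ε : ℝ} (hε : 0 < ε) {q : En n} (hq : q ≠ 0) :
    ‖density n (freg n ε) q - (((n.factorial : ℝ) / (2 * ‖q‖ ^ (2 * n)) : ℝ) : ℂ)‖ ≤
      (n.factorial : ℝ) / (2 * ‖q‖ ^ (2 * n)) := by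
  have hnonneg : 0 ≤ (n.factorial : ℝ) * (‖q‖ ^ 2 + 2 * ε) / (2 * (‖q‖ ^ 2 + ε) ^ (n + 1)) := by
    positivity
  have hle : (n.factorial : ℝ) * (‖q‖ ^ 2 + 2 * ε) / (2 * (‖q‖ ^ 2 + ε) ^ (n + 1)) ≤
      2 * ((n.factorial : ℝ) / (2 * ‖q‖ ^ (2 * n))) := calc
    _ ≤ (n.factorial : ℝ) * (2 * (‖q‖ ^ 2 + ε)) / (2 * (‖q‖ ^ 2 + ε) ^ (n + 1)) := by
        gcongr
        linarith [sq_nonneg ‖q‖]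
    _ = (n.factorial : ℝ) / (‖q‖ ^ 2 + ε) ^ n := by
        field_simp
        ring
    _ ≤ (n.factorial : ℝ) / (‖q‖ ^ 2) ^ n := by
        gcongr
        linarith
    _ = 2 * ((n.factorial : ℝ) / (2 * ‖q‖ ^ (2 * n))) := by
        rw [pow_mul]
        field_simp
  rw [density_freg hε, ← Complex.ofReal_sub, Complex.norm_real, Real.norm_eq_abs, abs_le]
  constructor <;> linarith

theorem locallyIntegrable_inv_norm_pow {E : Type*} [NormedAddCommGroup E] [NormedSpace ℝ E]
    [FiniteDimensional ℝ E] [MeasurableSpace E] [BorelSpace E] (μ : Measure E) [μ.IsAddHaarMeasure]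
    {k : ℕ} (hk : k < Module.finrank ℝ E) : LocallyIntegrable (fun x : E => (‖x‖ ^ k)⁻¹) μ := by
  refine locallyIntegrable_of_norm_le_rpow (C := 1) (by omega) (Nat.cast_lt.mpr hk)
    (.of_forall fun x => ?_) (Measurable.aestronglyMeasurable (by fun_prop))
  rw [Real.rpow_neg (norm_nonneg x), Real.rpow_natCast, one_mul, norm_inv, norm_pow, norm_norm]

theorem tendsto_setIntegral_norm_density_freg_sub (hn : 1 ≤ n) {K : Set (En n)}
    (hK : IsCompact K) :
    Tendsto (fun ε : ℝ => ∫ q in K, ‖density n (freg n ε) q -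
        (((n.factorial : ℝ) / (2 * ‖q‖ ^ (2 * n)) : ℝ) : ℂ)‖)
      (nhdsWithin 0 (Set.Ioi 0)) (nhds 0) := by
  have : Nonempty (Fin (4 * n)) := ⟨⟨0, by omega⟩⟩
  have hae : ∀ᵐ q : En n ∂volume.restrict K, q ≠ 0 :=
    ae_restrict_of_ae (Measure.ae_ne volume 0)
  have hint : Integrable (fun q : En n => (n.factorial : ℝ) / (2 * ‖q‖ ^ (2 * n)))
      (volume.restrict K) := by
    simpa only [div_mul_eq_div_div, div_eq_mul_inv _ (_ ^ (2 * n))] using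
      (((locallyIntegrable_inv_norm_pow volume (E := En n) (k := 2 * n)
        (by simp; omega)).integrableOn_isCompact hK).const_mul ((n.factorial : ℝ) / 2))
  rw [show nhds (0 : ℝ) = nhds (∫ _ in K, (0 : ℝ)) by simp]
  refine tendsto_integral_filter_of_dominated_convergence _ ?_ ?_ hint ?_
  · filter_upwards [self_mem_nhdsWithin] with ε hε
    simp only [density_freg hε]
    exact Measurable.aestronglyMeasurable (by fun_prop)
  · filter_upwards [self_mem_nhdsWithin] with ε hε
    filter_upwards [hae] with q hq
    simpa using norm_density_freg_sub_le hε hq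
  · filter_upwards [hae] with q hq
    exact tendsto_iff_norm_sub_tendsto_zero.mp (tendsto_density_freg hq)

end Regularization

theorem stmt_16 (n : ℕ) (hn : 1 ≤ n) :
    (∀ ε : ℝ, 0 < ε → ∀ q : En n,
      density n (freg n ε) q =
        (((n.factorial : ℝ) * (‖q‖ ^ 2 + 2 * ε) / (2 * (‖q‖ ^ 2 + ε) ^ (n + 1)) : ℝ) : ℂ)) ∧
    (∀ q : En n, q ≠ 0 →
      Tendsto (fun ε : ℝ => density n (freg n ε) q) (nhdsWithin 0 (Set.Ioi 0))
        (nhds (((n.factorial : ℝ) / (2 * ‖q‖ ^ (2 * n)) : ℝ) : ℂ))) ∧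
    (∀ K : Set (En n), IsCompact K →
      Tendsto
        (fun ε : ℝ =>
          ∫ q in K, ‖density n (freg n ε) q -
            (((n.factorial : ℝ) / (2 * ‖q‖ ^ (2 * n)) : ℝ) : ℂ)‖)
        (nhdsWithin 0 (Set.Ioi 0)) (nhds 0)) :=
  ⟨fun _ hε q => density_freg hε q, fun _ hq => tendsto_density_freg hq,
    fun _ hK => tendsto_setIntegral_norm_density_freg_sub hn hK⟩

end
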